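/- Let d be an odd positive integer and let 𝒟 = {D₁, D₂} be nontrivial partitions of d (neither equal to [d] nor to [1,…,1]) with ν(D₁) + ν(D₂) = d − 1, ν(D₁) ≥ ν(D₂), and D₁ ≠ [2,…,2,1]. Suppose D₁ has no parts equal to 1 and D₁ contains two parts x, y with x > y. Then there exist permutations α ∈ D₁ and β ∈ D₂ of the d-element set such that the cycle type of αβ is [d−2y, y, y]; moreover there exists a permutation ω with ω² = αβ such that the group ⟨α, β, ω⟩ is transitive. -/

import Mathlib

/-- The cycle type of a permutation, including fixed points as parts equal to `1`. -/
def fullCycleType {Ω : Type*} [Fintype Ω] [DecidableEq Ω] (σ : Equiv.Perm Ω) : Multiset ℕ :=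
  σ.cycleType + Multiset.replicate (Fintype.card Ω - σ.support.card) 1

/-- A multiset of positive integers summing to `d`, i.e. a partition of `d`. -/
def IsPartitionOf (d : ℕ) (D : Multiset ℕ) : Prop :=
  (∀ x ∈ D, 0 < x) ∧ D.sum = d

/-- The defect `ν(D) = Σⱼ (dⱼ − 1)` of a partition. -/
def nu (D : Multiset ℕ) : ℕ := (D.map (· - 1)).sum

/-- The partition `[2,…,2,1]` of an odd number `d`, with `(d−1)/2` parts equal to `2`. -/
def twosAndOne (d : ℕ) : Multiset ℕ := Multiset.replicate ((d - 1) / 2) 2 + {1}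

/-- A subgroup of the symmetric group on `Ω` is transitive. -/
def SubgroupTransitive {Ω : Type*} (G : Subgroup (Equiv.Perm Ω)) : Prop :=
  ∀ x y : Ω, ∃ g ∈ G, g x = y

/-- `Λ` is a block for the subgroup `G` of the symmetric group on `Ω`. -/
def IsBlockOf {Ω : Type*} (G : Subgroup (Equiv.Perm Ω)) (Λ : Set Ω) : Prop :=
  Λ.Nonempty ∧ ∀ g ∈ G, (⇑g '' Λ = Λ ∨ Disjoint (⇑g '' Λ) Λ)

/-- A block is trivial if it is a singleton or the whole set. -/
def TrivialBlock {Ω : Type*} (Λ : Set Ω) : Prop :=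
  (∃ x, Λ = {x}) ∨ Λ = Set.univ

/-- A subgroup of the symmetric group is primitive: transitive with only trivial blocks. -/
def SubgroupPrimitive {Ω : Type*} (G : Subgroup (Equiv.Perm Ω)) : Prop :=
  SubgroupTransitive G ∧ ∀ Λ : Set Ω, IsBlockOf G Λ → TrivialBlock Λ

/-- A subgroup of the symmetric group is imprimitive: transitive but not primitive. -/
def SubgroupImprimitive {Ω : Type*} (G : Subgroup (Equiv.Perm Ω)) : Prop :=
  SubgroupTransitive G ∧ ¬ SubgroupPrimitive G

/-- The orbit of `x` under a subgroup `G` of the symmetric group on `Ω`. -/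
def orbSet {Ω : Type*} (G : Subgroup (Equiv.Perm Ω)) (x : Ω) : Set Ω :=
  {y | ∃ g ∈ G, g x = y}

/-- The number of orbits of a subgroup `G` of the symmetric group on `Ω`. -/
noncomputable def numOrbits {Ω : Type*} (G : Subgroup (Equiv.Perm Ω)) : ℕ :=
  Nat.card (Set.range (orbSet G))

section Helpers
open Equiv Equiv.Perm
set_option linter.unusedSectionVars false
set_option linter.unnecessarySimpa false
variable {Ω : Type*} [Fintype Ω] [DecidableEq Ω]

open Classical in
/-- The cycle of `x` as a finset (a singleton for a fixed point). -/
noncomputable def orb (σ : Perm Ω) (x : Ω) : Finset Ω := Finset.univ.filter (fun z => σ.SameCycle x z)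

theorem mem_orb {σ : Perm Ω} {x z : Ω} : z ∈ orb σ x ↔ σ.SameCycle x z := by
  simp [orb]

theorem self_mem_orb (σ : Perm Ω) (x : Ω) : x ∈ orb σ x := mem_orb.2 (SameCycle.refl _ _)

theorem orb_eq_iff {σ : Perm Ω} {x z : Ω} : orb σ x = orb σ z ↔ σ.SameCycle x z := by
  constructor
  · intro h
    exact mem_orb.1 (h ▸ self_mem_orb σ z)
  · intro h
    ext w
    rw [mem_orb, mem_orb]
    exact ⟨fun h' => h.symm.trans h', fun h' => h.trans h'⟩

theorem orb_fixed {σ : Perm Ω} {x : Ω} (h : σ x = x) : orb σ x = {x} := by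
  ext z
  rw [mem_orb, Finset.mem_singleton]
  constructor
  · rintro ⟨n, rfl⟩
    exact Function.IsFixedPt.perm_zpow h n
  · rintro rfl
    exact SameCycle.refl _ _

theorem orb_inv (σ : Perm Ω) (x : Ω) : orb σ⁻¹ x = orb σ x := by
  ext z
  rw [mem_orb, mem_orb, sameCycle_inv]

theorem orb_conj (σ h : Perm Ω) (x : Ω) : orb (h * σ * h⁻¹) x = (orb σ (h⁻¹ x)).image h := by
  ext z
  simp only [mem_orb, Finset.mem_image, sameCycle_conj]
  constructor
  · intro H
    exact ⟨_, H, by simp⟩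
  · rintro ⟨w, hw, rfl⟩
    simpa using hw

/-- All cycles. -/
noncomputable def orbs (σ : Perm Ω) : Finset (Finset Ω) := Finset.univ.image (orb σ)

theorem orb_mem_orbs (σ : Perm Ω) (x : Ω) : orb σ x ∈ orbs σ :=
  Finset.mem_image_of_mem _ (Finset.mem_univ _)

theorem fct_eq (σ : Perm Ω) : fullCycleType σ = ∑ s ∈ orbs σ, ({s.card} : Multiset ℕ) := by
  have hF : orbs σ = (σ.cycleFactorsFinset.image support) ∪
      (Finset.univ.filter (fun x => σ x = x)).image (fun x => ({x} : Finset Ω)) := by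
    ext s
    simp only [orbs, Finset.mem_image, Finset.mem_union, Finset.mem_filter, Finset.mem_univ,
      true_and]
    have key : ∀ x, σ x ≠ x → orb σ x = (σ.cycleOf x).support := by
      intro x hx
      ext z
      rw [mem_orb, mem_support_cycleOf_iff]
      simp [mem_support, hx]
    constructor
    · rintro ⟨x, rfl⟩
      by_cases hx : σ x = x
      · right
        exact ⟨x, hx, (orb_fixed hx).symm⟩
      · left
        exact ⟨σ.cycleOf x, cycleOf_mem_cycleFactorsFinset_iff.2 (mem_support.2 hx), (key x hx).symm⟩
    · rintro (⟨c, hc, rfl⟩ | ⟨x, hx, rfl⟩)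
      · have hc' := (mem_cycleFactorsFinset_iff.1 hc).1
        obtain ⟨x, hx⟩ := hc'.nonempty_support
        have e := cycle_is_cycleOf hx hc
        refine ⟨x, ?_⟩
        rw [e]
        apply key
        have := mem_cycleFactorsFinset_support_le hc hx
        exact mem_support.1 this
      · exact ⟨x, orb_fixed hx⟩
  have hdis : Disjoint (σ.cycleFactorsFinset.image support)
      ((Finset.univ.filter (fun x => σ x = x)).image (fun x => ({x} : Finset Ω))) := by
    rw [Finset.disjoint_left]
    intro s h1 h2
    simp only [Finset.mem_image, Finset.mem_filter, Finset.mem_univ, true_and] at h1 h2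
    obtain ⟨c, hc, rfl⟩ := h1
    obtain ⟨x, hx, h⟩ := h2
    have := (mem_cycleFactorsFinset_iff.1 hc).1.two_le_card_support
    rw [← h] at this
    simp at this
  rw [hF, Finset.sum_union hdis, Finset.sum_image, Finset.sum_image]
  · unfold fullCycleType
    congr 1
    · rw [cycleType_def]
      rw [← Multiset.sum_map_singleton (Multiset.map _ _), Multiset.map_map]
      rfl
    · simp only [Finset.card_singleton, Finset.sum_const, Multiset.nsmul_singleton]
      congr 1
      rw [← Finset.card_compl]
      congr 1
      ext x
      simp
  · intro a _ b _ h
    simpa using h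
  · intro a ha b hb h
    have h1 := ha
    obtain ⟨x, hx⟩ := (mem_cycleFactorsFinset_iff.1 ha).1.nonempty_support
    have hx' : x ∈ b.support := by
      have : a.support = b.support := h
      rwa [← this]
    rw [cycle_is_cycleOf hx ha, cycle_is_cycleOf hx' hb]

/-- the multiplication-by-a-swap (merge) lemma: relation form -/
theorem merge_sameCycle {σ : Perm Ω} {i j : Ω} (hij : ¬ σ.SameCycle i j) (x z : Ω) :
    (σ * swap i j).SameCycle x z ↔ σ.SameCycle x z ∨
      ((σ.SameCycle i x ∨ σ.SameCycle j x) ∧ (σ.SameCycle i z ∨ σ.SameCycle j z)) := by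
  set τ := σ * swap i j with hτ
  have ti : τ i = σ j := by simp [hτ]
  have tj : τ j = σ i := by simp [hτ]
  have tow : ∀ w, w ≠ i → w ≠ j → τ w = σ w := by
    intro w h1 h2
    simp [hτ, swap_apply_of_ne_of_ne h1 h2]
  have hk : ∀ k : ℕ, (∀ m, 1 ≤ m → m ≤ k → (σ ^ m) j ≠ j) → τ.SameCycle i ((σ ^ (k + 1)) j) := by
    intro k
    induction k with
    | zero =>
      intro _
      rw [zero_add, pow_one, ← ti]
      exact sameCycle_apply_right.2 (SameCycle.refl _ _)
    | succ k ih =>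
      intro H
      have h1 := ih (fun m a b => H m a (by omega))
      rw [pow_succ' σ (k + 1), Perm.mul_apply, ← tow]
      · exact sameCycle_apply_right.2 h1
      · intro h
        apply hij
        have : σ.SameCycle j ((σ ^ (k + 1)) j) := ⟨(k + 1 : ℕ), by rw [zpow_natCast]⟩
        rw [h] at this
        exact this.symm
      · exact H _ (by omega) (by omega)
  have hiτj : τ.SameCycle i j := by
    have hex : ∃ n, 1 ≤ n ∧ (σ ^ n) j = j := ⟨orderOf σ, orderOf_pos σ, by simp [pow_orderOf_eq_one]⟩
    classical
    have hs := Nat.find_spec hex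
    have hm := fun m => Nat.find_min (H := hex) (m := m)
    set n := Nat.find hex
    have := hk (n - 1) (fun m a b h => hm m (by omega) ⟨a, h⟩)
    rw [show n - 1 + 1 = n by omega, hs.2] at this
    exact this
  have step : ∀ w, τ.SameCycle w (σ w) := by
    intro w
    by_cases h1 : w = i
    · subst h1
      rw [← tj]
      exact sameCycle_apply_right.2 hiτj
    · by_cases h2 : w = j
      · subst h2
        rw [← ti]
        exact sameCycle_apply_right.2 hiτj.symm
      · rw [← tow w h1 h2]
        exact sameCycle_apply_right.2 (SameCycle.refl _ _)
  have sub : ∀ x z, σ.SameCycle x z → τ.SameCycle x z := by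
    intro x z h
    obtain ⟨n, _, hn⟩ := h.exists_pow_eq'
    rw [← hn]
    clear hn
    have : ∀ n : ℕ, τ.SameCycle x ((σ ^ n) x) := by
      intro n
      induction n with
      | zero => exact SameCycle.refl _ _
      | succ n ih =>
        rw [pow_succ', Perm.mul_apply]
        exact ih.trans (step _)
    exact this n
  constructor
  · intro h
    obtain ⟨n, _, hn⟩ := h.exists_pow_eq'
    rw [← hn]
    clear hn
    have : ∀ n : ℕ, σ.SameCycle x ((τ ^ n) x) ∨
      ((σ.SameCycle i x ∨ σ.SameCycle j x) ∧
        (σ.SameCycle i ((τ ^ n) x) ∨ σ.SameCycle j ((τ ^ n) x))) := by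
      intro n
      induction n with
      | zero => exact Or.inl (SameCycle.refl _ _)
      | succ n ih =>
        rw [pow_succ', Perm.mul_apply]
        set w := (τ ^ n) x
        by_cases h1 : w = i
        · rw [h1, ti]
          rw [h1] at ih
          right
          refine ⟨?_, Or.inr (sameCycle_apply_right.2 (SameCycle.refl _ _))⟩
          rcases ih with h | h
          · exact Or.inl h.symm
          · exact h.1
        · by_cases h2 : w = j
          · rw [h2, tj]
            rw [h2] at ih
            right
            refine ⟨?_, Or.inl (sameCycle_apply_right.2 (SameCycle.refl _ _))⟩
            rcases ih with h | h
            · exact Or.inr h.symm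
            · exact h.1
          · rw [tow w h1 h2]
            simpa only [sameCycle_apply_right] using ih
    exact this n
  · have e : ∀ w, (σ.SameCycle i w ∨ σ.SameCycle j w) → τ.SameCycle i w := by
      rintro w (h | h)
      · exact sub _ _ h
      · exact hiτj.trans (sub _ _ h)
    rintro (h | ⟨h1, h2⟩)
    · exact sub _ _ h
    · exact (e _ h1).symm.trans (e _ h2)

theorem merge_orb_in {σ : Perm Ω} {i j : Ω} (hij : j ∉ orb σ i) {x : Ω}
    (hx : x ∈ orb σ i ∪ orb σ j) : orb (σ * swap i j) x = orb σ i ∪ orb σ j := by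
  rw [mem_orb] at hij
  ext z
  simp only [Finset.mem_union, mem_orb] at hx ⊢
  rw [merge_sameCycle hij]
  constructor
  · rintro (h | h)
    · rcases hx with h' | h'
      · exact Or.inl (h'.trans h)
      · exact Or.inr (h'.trans h)
    · exact h.2
  · intro h
    exact Or.inr ⟨hx, h⟩

theorem merge_orb_out {σ : Perm Ω} {i j : Ω} (hij : j ∉ orb σ i) {x : Ω}
    (hx : x ∉ orb σ i ∪ orb σ j) : orb (σ * swap i j) x = orb σ x := by
  rw [mem_orb] at hij
  ext z
  simp only [Finset.mem_union, mem_orb] at hx ⊢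
  rw [merge_sameCycle hij]
  constructor
  · rintro (h | h)
    · exact h
    · exact absurd h.1 hx
  · intro h
    exact Or.inl h

theorem orb_disjoint {σ : Perm Ω} {i j : Ω} (hij : j ∉ orb σ i) : Disjoint (orb σ i) (orb σ j) := by
  rw [mem_orb] at hij
  rw [Finset.disjoint_left]
  intro z h1 h2
  rw [mem_orb] at h1 h2
  exact hij (h1.trans h2.symm)

theorem merge_ct {σ : Perm Ω} {i j : Ω} (hij : j ∉ orb σ i) :
    ∃ R, fullCycleType σ = (orb σ i).card ::ₘ (orb σ j).card ::ₘ R ∧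
      fullCycleType (σ * swap i j) = ((orb σ i).card + (orb σ j).card) ::ₘ R := by
  have hd := orb_disjoint hij
  have hne : orb σ j ≠ orb σ i := fun h => hij (h ▸ self_mem_orb σ j)
  have hF : orbs (σ * swap i j) =
      insert (orb σ i ∪ orb σ j) (((orbs σ).erase (orb σ i)).erase (orb σ j)) := by
    ext s
    simp only [Finset.mem_insert, Finset.mem_erase]
    constructor
    · intro h
      obtain ⟨x, -, rfl⟩ := Finset.mem_image.1 h
      by_cases hx : x ∈ orb σ i ∪ orb σ j
      · exact Or.inl (merge_orb_in hij hx)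
      · rw [merge_orb_out hij hx]
        right
        refine ⟨?_, ?_, orb_mem_orbs _ _⟩
        · intro h
          exact hx (Finset.mem_union_right _ (h ▸ self_mem_orb σ x))
        · intro h
          exact hx (Finset.mem_union_left _ (h ▸ self_mem_orb σ x))
    · rintro (rfl | ⟨h1, h2, h3⟩)
      · rw [← merge_orb_in hij (Finset.mem_union_left _ (self_mem_orb σ i))]
        exact orb_mem_orbs _ _
      · obtain ⟨x, -, rfl⟩ := Finset.mem_image.1 h3
        rw [← merge_orb_out hij (x := x)]
        · exact orb_mem_orbs _ _
        · intro hx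
          rcases Finset.mem_union.1 hx with h | h
          · exact h2 (orb_eq_iff.2 (mem_orb.1 h)).symm
          · exact h1 (orb_eq_iff.2 (mem_orb.1 h)).symm
  refine ⟨∑ s ∈ ((orbs σ).erase (orb σ i)).erase (orb σ j), ({s.card} : Multiset ℕ), ?_, ?_⟩
  · rw [fct_eq, ← Finset.add_sum_erase _ _ (orb_mem_orbs σ i),
      ← Finset.add_sum_erase _ _ (Finset.mem_erase.2 ⟨hne, orb_mem_orbs σ j⟩)]
    rw [Multiset.singleton_add, Multiset.singleton_add]
  · rw [fct_eq, hF, Finset.sum_insert, Finset.card_union_of_disjoint hd]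
    · simp
    · intro h
      simp only [Finset.mem_erase] at h
      obtain ⟨x, -, hx⟩ := Finset.mem_image.1 h.2.2
      have hi : i ∈ orb σ x := by
        rw [hx]
        exact Finset.mem_union_left _ (self_mem_orb σ i)
      apply h.2.1
      rw [← hx]
      exact orb_eq_iff.2 (mem_orb.1 hi)

theorem fct_inv (σ : Perm Ω) : fullCycleType σ⁻¹ = fullCycleType σ := by
  simp [fullCycleType]

theorem fct_conj (σ h : Perm Ω) : fullCycleType (h * σ * h⁻¹) = fullCycleType σ := by
  simp [fullCycleType]

theorem swap_mul_eq (σ : Perm Ω) (i j : Ω) : swap i j * σ = (σ⁻¹ * swap i j)⁻¹ := by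
  simp

theorem lmerge_orb_in {σ : Perm Ω} {i j : Ω} (hij : j ∉ orb σ i) {x : Ω}
    (hx : x ∈ orb σ i ∪ orb σ j) : orb (swap i j * σ) x = orb σ i ∪ orb σ j := by
  rw [swap_mul_eq, orb_inv, merge_orb_in] <;> simpa only [orb_inv]

theorem lmerge_orb_out {σ : Perm Ω} {i j : Ω} (hij : j ∉ orb σ i) {x : Ω}
    (hx : x ∉ orb σ i ∪ orb σ j) : orb (swap i j * σ) x = orb σ x := by
  rw [swap_mul_eq, orb_inv, merge_orb_out, orb_inv] <;> simpa only [orb_inv]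

theorem lmerge_ct {σ : Perm Ω} {i j : Ω} (hij : j ∉ orb σ i) :
    ∃ R, fullCycleType σ = (orb σ i).card ::ₘ (orb σ j).card ::ₘ R ∧
      fullCycleType (swap i j * σ) = ((orb σ i).card + (orb σ j).card) ::ₘ R := by
  have := merge_ct (σ := σ⁻¹) (i := i) (j := j) (by simpa only [orb_inv])
  rw [swap_mul_eq, fct_inv]
  simpa only [orb_inv, fct_inv] using this

theorem merge_ct' {σ : Perm Ω} {i j : Ω} (hij : j ∉ orb σ i) {a b : ℕ} {R : Multiset ℕ}
    (hi : (orb σ i).card = a) (hj : (orb σ j).card = b) (h : fullCycleType σ = a ::ₘ b ::ₘ R) :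
    fullCycleType (σ * swap i j) = (a + b) ::ₘ R := by
  obtain ⟨R', h1, h2⟩ := merge_ct hij
  rw [hi, hj] at h1 h2
  rw [h1] at h
  have : R' = R := by simpa using h
  rw [h2, this]

theorem lmerge_ct' {σ : Perm Ω} {i j : Ω} (hij : j ∉ orb σ i) {a b : ℕ} {R : Multiset ℕ}
    (hi : (orb σ i).card = a) (hj : (orb σ j).card = b) (h : fullCycleType σ = a ::ₘ b ::ₘ R) :
    fullCycleType (swap i j * σ) = (a + b) ::ₘ R := by
  obtain ⟨R', h1, h2⟩ := lmerge_ct hij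
  rw [hi, hj] at h1 h2
  rw [h1] at h
  have : R' = R := by simpa using h
  rw [h2, this]

theorem commute_of_fix {σ c : Perm Ω} (U : Finset Ω) (h1 : ∀ x ∈ U, σ x = x)
    (h2 : ∀ x ∉ U, c x = x) : Commute σ c := by
  apply Perm.Disjoint.commute
  intro x
  by_cases hx : x ∈ U
  · exact Or.inl (h1 x hx)
  · exact Or.inr (h2 x hx)

/-- `c` is a cycle on exactly `U`, in the form we need it. -/
structure Fresh (U : Finset Ω) (c : Perm Ω) : Prop where
  fix : ∀ x ∉ U, c x = x
  orb_in : ∀ σ : Perm Ω, (∀ x ∈ U, σ x = x) → ∀ x ∈ U, orb (σ * c) x = U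
  orb_out : ∀ σ : Perm Ω, (∀ x ∈ U, σ x = x) → ∀ x ∉ U, orb (σ * c) x = orb σ x
  ct : ∀ σ : Perm Ω, (∀ x ∈ U, σ x = x) → ∀ R,
    fullCycleType σ = Multiset.replicate U.card 1 + R → fullCycleType (σ * c) = U.card ::ₘ R

theorem Fresh.single (a : Ω) : Fresh {a} (1 : Perm Ω) where
  fix := by simp
  orb_in := by
    intro σ h x hx
    rw [Finset.mem_singleton] at hx
    subst hx
    rw [mul_one, orb_fixed (h _ (by simp))]
  orb_out := by simp
  ct := by
    intro σ h R hR
    rw [mul_one, hR]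
    simp

theorem Fresh.cons {U : Finset Ω} {c : Perm Ω} (hc : Fresh U c) {a f : Ω} (ha : a ∈ U)
    (hf : f ∉ U) : Fresh (insert f U) (c * swap a f) where
  fix := by
    intro x hx
    simp only [Finset.mem_insert, not_or] at hx
    rw [Perm.mul_apply, swap_apply_of_ne_of_ne, hc.fix _ hx.2]
    · rintro rfl
      exact hx.2 ha
    · exact hx.1
  orb_in := by
    intro σ h x hx
    have hσ : ∀ x ∈ U, σ x = x := fun x hx => h x (Finset.mem_insert_of_mem hx)
    have h1 := hc.orb_in σ hσ a ha
    have h2 : orb (σ * c) f = {f} := by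
      rw [hc.orb_out σ hσ f hf, orb_fixed (h _ (by simp))]
    rw [← mul_assoc, merge_orb_in, h1, h2, Finset.union_comm]
    · rfl
    · rwa [h1]
    · rw [h1, h2]
      simpa [or_comm] using hx
  orb_out := by
    intro σ h x hx
    have hσ : ∀ x ∈ U, σ x = x := fun x hx => h x (Finset.mem_insert_of_mem hx)
    have h1 := hc.orb_in σ hσ a ha
    have h2 : orb (σ * c) f = {f} := by
      rw [hc.orb_out σ hσ f hf, orb_fixed (h _ (by simp))]
    rw [← mul_assoc, merge_orb_out, hc.orb_out σ hσ x]
    · intro hx'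
      exact hx (by simp [hx'])
    · rwa [h1]
    · rw [h1, h2]
      simpa [or_comm] using hx
  ct := by
    intro σ h R hR
    have hσ : ∀ x ∈ U, σ x = x := fun x hx => h x (Finset.mem_insert_of_mem hx)
    have h1 := hc.orb_in σ hσ a ha
    have h2 : orb (σ * c) f = {f} := by
      rw [hc.orb_out σ hσ f hf, orb_fixed (h _ (by simp))]
    rw [Finset.card_insert_of_notMem hf] at hR ⊢
    rw [← mul_assoc]
    apply merge_ct'
    · rwa [h1]
    · rw [h1]
    · rw [h2]
      rfl
    · apply hc.ct σ hσ
      rw [hR, Multiset.replicate_succ]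
      simp

theorem Fresh.exists {U : Finset Ω} (hU : U.Nonempty) : ∃ c : Perm Ω, Fresh U c := by
  induction hU using Finset.Nonempty.cons_induction with
  | singleton a => exact ⟨1, Fresh.single a⟩
  | cons a s h hs ih =>
    obtain ⟨c, hc⟩ := ih
    obtain ⟨b, hb⟩ := hs
    rw [Finset.cons_eq_insert]
    exact ⟨_, hc.cons hb h⟩

theorem Fresh.conj {U : Finset Ω} {c : Perm Ω} (hc : Fresh U c) (h : Perm Ω) :
    Fresh (U.image h) (h * c * h⁻¹) := by
  have key : ∀ σ : Perm Ω, σ * (h * c * h⁻¹) = h * ((h⁻¹ * σ * h) * c) * h⁻¹ := by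
    intro σ
    group
  have key2 : ∀ σ : Perm Ω, h * (h⁻¹ * σ * h) * h⁻¹ = σ := by
    intro σ
    group
  have hfix : ∀ σ : Perm Ω, (∀ x ∈ U.image h, σ x = x) → ∀ x ∈ U, (h⁻¹ * σ * h) x = x := by
    intro σ hσ x hx
    simp [hσ (h x) (Finset.mem_image_of_mem _ hx)]
  have hmem : ∀ x, h⁻¹ x ∈ U ↔ x ∈ U.image h := by
    intro x
    simp only [Finset.mem_image]
    constructor
    · intro hx
      exact ⟨_, hx, by simp⟩
    · rintro ⟨z, hz, rfl⟩
      simpa using hz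
  have hcard : (U.image h).card = U.card := Finset.card_image_of_injective _ h.injective
  constructor
  · intro x hx
    rw [← hmem] at hx
    rw [Perm.mul_apply, Perm.mul_apply, hc.fix _ hx]
    simp
  · intro σ hσ x hx
    rw [key, orb_conj, hc.orb_in _ (hfix σ hσ) _ ((hmem x).2 hx)]
  · intro σ hσ x hx
    rw [key, orb_conj, hc.orb_out _ (hfix σ hσ) _ (fun h' => hx ((hmem x).1 h')), ← orb_conj, key2]
  · intro σ hσ R hR
    rw [key, fct_conj, hcard]
    apply hc.ct _ (hfix σ hσ)
    rw [← fct_conj _ h, key2, hR, hcard]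

/-- `(α, β)` is a planar tree on the points of `S`. -/
structure IsT (α β : Perm Ω) (S : Finset Ω) (A B : Multiset ℕ) : Prop where
  fa : ∀ x ∉ S, α x = x
  fb : ∀ x ∉ S, β x = x
  og : ∀ x ∈ S, orb (α * β) x = S
  ca : fullCycleType α = A + Multiset.replicate (Fintype.card Ω - S.card) 1
  cb : fullCycleType β = B + Multiset.replicate (Fintype.card Ω - S.card) 1
  cg : fullCycleType (α * β) = S.card ::ₘ Multiset.replicate (Fintype.card Ω - S.card) 1

theorem IsT.symm {α β : Perm Ω} {S : Finset Ω} {A B : Multiset ℕ} (h : IsT α β S A B) :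
    IsT β⁻¹ α⁻¹ S B A where
  fa := fun x hx => by rw [inv_eq_iff_eq, h.fb x hx]
  fb := fun x hx => by rw [inv_eq_iff_eq, h.fa x hx]
  og := fun x hx => by rw [← mul_inv_rev, orb_inv, h.og x hx]
  ca := by rw [fct_inv, h.cb]
  cb := by rw [fct_inv, h.ca]
  cg := by rw [← mul_inv_rev, fct_inv, h.cg]

theorem IsT.step {α β : Perm Ω} {S : Finset Ω} {A B : Multiset ℕ} {b : ℕ}
    (h : IsT α β S A (b ::ₘ B)) {p q : Ω} (hp : p ∈ S) (hq : q ∉ S) (hb : (orb β p).card = b) :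
    IsT α (β * swap p q) (insert q S) (1 ::ₘ A) ((b + 1) ::ₘ B) := by
  have hlt : S.card < Fintype.card Ω := by
    rw [← Finset.card_univ]
    apply Finset.card_lt_card
    exact Finset.ssubset_univ_iff.2 (fun h => hq (h ▸ Finset.mem_univ q))
  obtain ⟨k, hk⟩ : ∃ k, Fintype.card Ω = S.card + 1 + k := ⟨Fintype.card Ω - S.card - 1, by omega⟩
  have e1 : Fintype.card Ω - S.card = k + 1 := by omega
  have e2 : Fintype.card Ω - (S.card + 1) = k := by omega
  have hpq : p ≠ q := fun h => hq (h ▸ hp)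
  have oq : orb β q = {q} := orb_fixed (h.fb q hq)
  have gq : orb (α * β) q = {q} := orb_fixed (by simp [h.fb q hq, h.fa q hq])
  have gp := h.og p hp
  have n1 : q ∉ orb β p := by
    intro h'
    have := orb_eq_iff.2 (mem_orb.1 h')
    rw [oq] at this
    have h2 := self_mem_orb β p
    rw [this] at h2
    simp [hpq] at h2
  have n2 : q ∉ orb (α * β) p := by rwa [gp]
  have hca := h.ca
  have hcb := h.cb
  have hcg := h.cg
  rw [e1] at hca hcb hcg
  constructor
  · intro x hx
    exact h.fa x (fun h' => hx (by simp [h']))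
  · intro x hx
    simp only [Finset.mem_insert, not_or] at hx
    rw [Perm.mul_apply, swap_apply_of_ne_of_ne, h.fb _ hx.2]
    · rintro rfl
      exact hx.2 hp
    · exact hx.1
  · intro x hx
    rw [← mul_assoc, merge_orb_in n2, gp, gq, Finset.union_comm]
    · rfl
    · rw [gp, gq]
      simpa [or_comm] using hx
  · rw [Finset.card_insert_of_notMem hq, e2, hca, Multiset.replicate_succ]
    simp
  · rw [Finset.card_insert_of_notMem hq, e2, Multiset.cons_add]
    apply merge_ct' n1 hb
    · rw [oq]
      rfl
    · rw [hcb, Multiset.replicate_succ, Multiset.cons_add, Multiset.add_cons]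
  · rw [Finset.card_insert_of_notMem hq, e2, ← mul_assoc]
    apply merge_ct' n2
    · rw [gp]
    · rw [gq]
      rfl
    · rw [hcg, Multiset.replicate_succ]

/-- pointed trees -/
def PT (Ω : Type*) [Fintype Ω] [DecidableEq Ω] (n a b : ℕ) (A B : Multiset ℕ) : Prop :=
  ∃ (α β : Perm Ω) (S : Finset Ω) (p : Ω), IsT α β S (a ::ₘ A) (b ::ₘ B) ∧ S.card = n ∧ p ∈ S ∧
    (orb α p).card = a ∧ (orb β p).card = b

theorem PT.symm {n a b : ℕ} {A B : Multiset ℕ} (h : PT Ω n a b A B) : PT Ω n b a B A := by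
  obtain ⟨α, β, S, p, h1, h2, h3, h4, h5⟩ := h
  exact ⟨β⁻¹, α⁻¹, S, p, h1.symm, h2, h3, by rwa [orb_inv], by rwa [orb_inv]⟩

theorem exists_notMem_of_card {S : Finset Ω} (h : S.card < Fintype.card Ω) : ∃ q, q ∉ S := by
  by_contra! H
  rw [Finset.eq_univ_iff_forall.2 H, Finset.card_univ] at h
  omega

/-- extending a tree by a leaf, keeping the point -/
theorem PT.step1 {n a b : ℕ} {A B : Multiset ℕ} (h : PT Ω n a b A B) (hn : n < Fintype.card Ω) :
    PT Ω (n + 1) a (b + 1) (1 ::ₘ A) B := by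
  obtain ⟨α, β, S, p, h1, rfl, h3, h4, h5⟩ := h
  obtain ⟨q, hq⟩ := exists_notMem_of_card hn
  have hn : q ∉ orb β p := by
    intro h'
    have := orb_eq_iff.2 (mem_orb.1 h')
    rw [orb_fixed (h1.fb q hq)] at this
    have h2 := self_mem_orb β p
    rw [this, Finset.mem_singleton] at h2
    exact hq (h2 ▸ h3)
  refine ⟨α, β * swap p q, insert q S, p, ?_, Finset.card_insert_of_notMem hq,
    Finset.mem_insert_of_mem h3, h4, ?_⟩
  · rw [Multiset.cons_swap]
    exact h1.step h3 hq h5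
  · rw [merge_orb_in hn (Finset.mem_union_left _ (self_mem_orb _ _)),
      Finset.card_union_of_disjoint (orb_disjoint hn), h5, orb_fixed (h1.fb q hq)]
    rfl

/-- extending a tree by a leaf, moving the point to the leaf -/
theorem PT.step2 {n a b : ℕ} {A B : Multiset ℕ} (h : PT Ω n a b A B) (hn : n < Fintype.card Ω) :
    PT Ω (n + 1) 1 (b + 1) (a ::ₘ A) B := by
  obtain ⟨α, β, S, p, h1, rfl, h3, h4, h5⟩ := h
  obtain ⟨q, hq⟩ := exists_notMem_of_card hn
  have hn : q ∉ orb β p := by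
    intro h'
    have := orb_eq_iff.2 (mem_orb.1 h')
    rw [orb_fixed (h1.fb q hq)] at this
    have h2 := self_mem_orb β p
    rw [this, Finset.mem_singleton] at h2
    exact hq (h2 ▸ h3)
  refine ⟨α, β * swap p q, insert q S, q, ?_, Finset.card_insert_of_notMem hq,
    Finset.mem_insert_self _ _, ?_, ?_⟩
  · exact h1.step h3 hq h5
  · rw [orb_fixed (h1.fa q hq)]
    rfl
  · rw [merge_orb_in hn (Finset.mem_union_right _ (self_mem_orb _ _)),
      Finset.card_union_of_disjoint (orb_disjoint hn), h5, orb_fixed (h1.fb q hq)]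
    rfl

theorem card_le_sum {A : Multiset ℕ} (h : ∀ x ∈ A, 0 < x) : A.card ≤ A.sum := by
  induction A using Multiset.induction_on with
  | empty => simp
  | cons a A ih =>
    have := ih (fun x hx => h x (by simp [hx]))
    have := h a (by simp)
    simp only [Multiset.card_cons, Multiset.sum_cons]
    omega

theorem two_card_le_sum {A : Multiset ℕ} (h : ∀ x ∈ A, 2 ≤ x) : 2 * A.card ≤ A.sum := by
  induction A using Multiset.induction_on with
  | empty => simp
  | cons a A ih =>
    have := ih (fun x hx => h x (by simp [hx]))
    have := h a (by simp)
    simp only [Multiset.card_cons, Multiset.sum_cons]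
    omega

theorem exists_two_le {A : Multiset ℕ} (h : A.card < A.sum) : ∃ x ∈ A, 2 ≤ x := by
  by_contra! H
  have : A.sum ≤ A.card := by
    simpa using Multiset.sum_le_card_nsmul A 1 (fun x hx => by have := H x hx; omega)
  omega

theorem tree_exists_aux (n : ℕ) : n + 1 ≤ Fintype.card Ω → ∀ (a b : ℕ) (A B : Multiset ℕ),
    0 < a → 0 < b → (∀ x ∈ A, 0 < x) → (∀ x ∈ B, 0 < x) → a + A.sum = n + 1 → b + B.sum = n + 1 →
    A.card + B.card = n → (n = 0 ∨ ¬ (a = 1 ∧ b = 1)) → PT Ω (n + 1) a b A B := by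
  induction n with
  | zero =>
    intro hn a b A B ha hb hA hB hsa hsb hc _
    have hA0 : A = 0 := Multiset.card_eq_zero.1 (by omega)
    have hB0 : B = 0 := Multiset.card_eq_zero.1 (by omega)
    subst hA0 hB0
    have ea : a = 1 := by simpa using hsa
    have eb : b = 1 := by simpa using hsb
    subst ea eb
    obtain ⟨p⟩ : Nonempty Ω := Fintype.card_pos_iff.1 (by omega)
    have c1 : fullCycleType (1 : Perm Ω) = Multiset.replicate (Fintype.card Ω) 1 := by
      simp [fullCycleType]
    obtain ⟨k, hk⟩ : ∃ k, Fintype.card Ω = k + 1 := ⟨Fintype.card Ω - 1, by omega⟩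
    have o1 : orb (1 : Perm Ω) p = {p} := orb_fixed rfl
    refine ⟨1, 1, {p}, p, ⟨?_, ?_, ?_, ?_, ?_, ?_⟩, by simp, by simp, by simp [o1], by simp [o1]⟩
    · simp
    · simp
    · intro x hx
      rw [Finset.mem_singleton] at hx
      rw [hx, mul_one, o1]
    · rw [c1, hk]
      simp [Multiset.replicate_succ]
    · rw [c1, hk]
      simp [Multiset.replicate_succ]
    · rw [mul_one, c1, hk]
      simp [Multiset.replicate_succ]
  | succ n ih =>
    -- the case `a = 1`
    have caseA : n + 1 + 1 ≤ Fintype.card Ω → ∀ (b : ℕ) (A B : Multiset ℕ),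
        2 ≤ b → (∀ x ∈ A, 0 < x) → (∀ x ∈ B, 0 < x) →
        1 + A.sum = n + 1 + 1 → b + B.sum = n + 1 + 1 → A.card + B.card = n + 1 →
        PT Ω (n + 1 + 1) 1 b A B := by
      intro hn b A B hb hA hB hsa hsb hc
      obtain ⟨b, rfl⟩ : ∃ c, b = c + 1 := ⟨b - 1, by omega⟩
      have hx : ∃ a' ∈ A, n = 0 ∨ ¬ (a' = 1 ∧ b = 1) := by
        by_cases hlt : A.card < A.sum
        · obtain ⟨a', h1, h2⟩ := exists_two_le hlt
          exact ⟨a', h1, Or.inr (by omega)⟩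
        · have hB0 : B = 0 := by
            apply Multiset.card_eq_zero.1
            omega
          have hpos : 0 < A.card := by omega
          obtain ⟨a', ha'⟩ := Multiset.card_pos_iff_exists_mem.1 hpos
          refine ⟨a', ha', ?_⟩
          subst hB0
          simp only [Multiset.sum_zero] at hsb
          omega
      obtain ⟨a', ha', hcond⟩ := hx
      obtain ⟨A', rfl⟩ := Multiset.exists_cons_of_mem ha'
      simp only [Multiset.sum_cons, Multiset.card_cons] at hsa hc
      exact (ih (by omega) a' b A' B (hA _ (by simp)) (by omega) (fun x hx => hA x (by simp [hx])) hB
        (by omega) (by omega) (by omega) hcond).step2 (by omega)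
    -- the case where `1 ∈ A` and both are at least two
    have caseB : n + 1 + 1 ≤ Fintype.card Ω → ∀ (a b : ℕ) (A B : Multiset ℕ),
        2 ≤ a → 2 ≤ b → (∀ x ∈ A, 0 < x) → (∀ x ∈ B, 0 < x) → 1 ∈ A → 
        a + A.sum = n + 1 + 1 → b + B.sum = n + 1 + 1 → A.card + B.card = n + 1 →
        PT Ω (n + 1 + 1) a b A B := by
      intro hn a b A B ha hb hA hB h1 hsa hsb hc
      obtain ⟨b, rfl⟩ : ∃ c, b = c + 1 := ⟨b - 1, by omega⟩
      obtain ⟨A', rfl⟩ := Multiset.exists_cons_of_mem h1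
      simp only [Multiset.sum_cons, Multiset.card_cons] at hsa hc
      exact (ih (by omega) a b A' B (by omega) (by omega) (fun x hx => hA x (by simp [hx])) hB
        (by omega) (by omega) (by omega) (by omega)).step1 (by omega)
    intro hn a b A B ha hb hA hB hsa hsb hc hcond
    by_cases ha1 : a = 1
    · subst ha1
      exact caseA hn b A B (by omega) hA hB hsa hsb hc
    by_cases hb1 : b = 1
    · subst hb1
      exact (caseA hn a B A (by omega) hB hA hsb hsa (by omega)).symm
    by_cases h1A : 1 ∈ A
    · exact caseB hn a b A B (by omega) (by omega) hA hB h1A hsa hsb hc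
    by_cases h1B : 1 ∈ B
    · exact (caseB hn b a B A (by omega) (by omega) hB hA h1B hsb hsa (by omega)).symm
    exfalso
    have e1 := two_card_le_sum (A := A) (fun x hx => by
      have := hA x hx
      have : x ≠ 1 := fun h => h1A (h ▸ hx)
      omega)
    have e2 := two_card_le_sum (A := B) (fun x hx => by
      have := hB x hx
      have : x ≠ 1 := fun h => h1B (h ▸ hx)
      omega)
    omega

theorem exists_flip {U V : Finset Ω} (hd : _root_.Disjoint U V) (hc : U.card = V.card) :
    ∃ h : Perm Ω, h * h = 1 ∧ (∀ x, x ∉ U → x ∉ V → h x = x) ∧ U.image h = V := by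
  let e : U ≃ V := Finset.equivOfCardEq hc
  let f : Ω → Ω := fun x => if h : x ∈ U then (e ⟨x, h⟩ : Ω) else
    if h : x ∈ V then (e.symm ⟨x, h⟩ : Ω) else x
  have hUV : ∀ x, x ∈ V → x ∉ U := fun x hx hx' => (Finset.disjoint_left.1 hd) hx' hx
  have fU : ∀ x (h : x ∈ U), f x = e ⟨x, h⟩ := fun x h => by simp [f, h]
  have fV : ∀ x (h : x ∈ V), f x = e.symm ⟨x, h⟩ := fun x h => by simp [f, h, hUV x h]
  have fO : ∀ x, x ∉ U → x ∉ V → f x = x := fun x h h' => by simp [f, h, h']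
  have hinv : Function.Involutive f := by
    intro x
    by_cases h : x ∈ U
    · rw [fU x h, fV _ (e ⟨x, h⟩).2]
      simp
    · by_cases h' : x ∈ V
      · rw [fV x h', fU _ (e.symm ⟨x, h'⟩).2]
        simp
      · rw [fO x h h', fO x h h']
  refine ⟨hinv.toPerm, ?_, ?_, ?_⟩
  · ext x
    exact hinv x
  · exact fO
  · ext x
    simp only [Finset.mem_image, Function.Involutive.coe_toPerm]
    constructor
    · rintro ⟨z, hz, rfl⟩
      rw [fU z hz]
      exact (e ⟨z, hz⟩).2
    · intro hx
      refine ⟨f x, ?_, hinv x⟩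
      rw [fV x hx]
      exact (e.symm ⟨x, hx⟩).2

theorem pow_card_orb_eq_one {γ : Perm Ω} {S : Finset Ω} (hf : ∀ x ∉ S, γ x = x)
    (ho : ∀ x ∈ S, orb γ x = S) : γ ^ S.card = 1 := by
  ext x
  by_cases hx : x ∈ S
  · have hcy : γ.IsCycleOn (S : Set Ω) := by
      refine ⟨⟨?_, γ.injective.injOn, ?_⟩, ?_⟩
      · intro z hz
        have : γ z ∈ orb γ z := mem_orb.2 (sameCycle_apply_right.2 (SameCycle.refl _ _))
        rwa [ho z hz] at this
      · intro z hz
        have : γ⁻¹ z ∈ orb γ z := mem_orb.2 ⟨-1, by rw [zpow_neg_one]⟩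
        rw [ho z hz] at this
        exact ⟨_, this, by simp⟩
      · intro z hz w hw
        rw [← mem_orb, ho z hz]
        exact hw
    exact hcy.pow_card_apply hx
  · rw [Perm.one_apply]
    exact Function.IsFixedPt.perm_pow (hf x hx) _

theorem rel_of_orb {G : Subgroup (Perm Ω)} {g : Perm Ω} (hg : g ∈ G) {x z : Ω} (h : z ∈ orb g x) :
    ∃ k ∈ G, k x = z := by
  obtain ⟨n, hn⟩ := mem_orb.1 h
  exact ⟨g ^ n, G.zpow_mem hg n, hn⟩

theorem finish {γ c h α β : Perm Ω} {S U V : Finset Ω} {y : ℕ} {p q : Ω}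
    (hf : ∀ x ∉ S, γ x = x) (ho : ∀ x ∈ S, orb γ x = S)
    (hct : fullCycleType γ = S.card ::ₘ Multiset.replicate (Fintype.card Ω - S.card) 1)
    (hodd : Odd S.card) (hc : Fresh U c) (hU : U.card = y) (hh : h * h = 1)
    (hhf : ∀ x, x ∉ U → x ∉ V → h x = x) (hV : U.image h = V)
    (dSU : _root_.Disjoint S U) (dSV : _root_.Disjoint S V) (dUV : _root_.Disjoint U V)
    (hN : Fintype.card Ω = S.card + 2 * y) (hp : p ∈ S) (hq : q ∈ U)
    (hαβ : α * β = γ * c * (h * c * h⁻¹)) (hpq : q ∈ orb α p) :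
    fullCycleType (α * β) = {S.card, y, y} ∧
      ∃ ω : Perm Ω, ω ^ 2 = α * β ∧ SubgroupTransitive (Subgroup.closure {α, β, ω}) := by
  have hVc : V.card = y := by
    rw [← hV, Finset.card_image_of_injective _ h.injective, hU]
  have hc2 := hc.conj h
  rw [hV] at hc2
  have hinv : h⁻¹ = h := inv_eq_of_mul_eq_one_left hh
  rw [Finset.disjoint_left] at dSU dSV dUV
  have fU : ∀ x ∈ U, γ x = x := fun x hx => hf x (fun h => dSU h hx)
  have fV : ∀ x ∈ V, (γ * c) x = x := fun x hx => by
    rw [Perm.mul_apply, hc.fix x (fun h => dUV h hx), hf x (fun h => dSV h hx)]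
  have oS : ∀ x ∈ S, orb (α * β) x = S := by
    intro x hx
    rw [hαβ, hc2.orb_out _ fV x (dSV hx), hc.orb_out _ fU x (dSU hx), ho x hx]
  have oU : ∀ x ∈ U, orb (α * β) x = U := by
    intro x hx
    rw [hαβ, hc2.orb_out _ fV x (dUV hx), hc.orb_in _ fU x hx]
  have oV : ∀ x ∈ V, orb (α * β) x = V := by
    intro x hx
    rw [hαβ, hc2.orb_in _ fV x hx]
  constructor
  · rw [hαβ]
    have e1 : fullCycleType (γ * c) = y ::ₘ (Multiset.replicate y 1 + {S.card}) := by
      rw [← hU]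
      apply hc.ct γ fU
      rw [hct, hU, hN, show S.card + 2 * y - S.card = y + y by omega, Multiset.replicate_add]
      rw [← add_assoc, add_comm _ ({S.card} : Multiset ℕ), Multiset.singleton_add]
    have e2 := hc2.ct (γ * c) fV (y ::ₘ {S.card}) (by
      rw [e1, hVc, Multiset.add_cons])
    rw [e2, hVc]
    have : ({S.card, y, y} : Multiset ℕ) = {S.card} + {y} + {y} := rfl
    rw [this]
    simp only [← Multiset.singleton_add]
    abel
  · obtain ⟨k, hk⟩ := hodd
    have cc : Commute γ c := commute_of_fix U fU hc.fix
    have ch : Commute γ h := by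
      apply commute_of_fix (U ∪ V)
      · intro x hx
        rcases Finset.mem_union.1 hx with h | h
        · exact fU x h
        · exact hf x (fun h' => dSV h' h)
      · intro x hx
        simp only [Finset.mem_union, not_or] at hx
        exact hhf x hx.1 hx.2
    refine ⟨γ ^ (k + 1) * (c * h), ?_, ?_⟩
    · have c1 : Commute (γ ^ (k + 1)) (c * h) := (cc.mul_right ch).pow_left _
      rw [c1.mul_pow, ← pow_mul, show (k + 1) * 2 = S.card + 1 by omega, pow_succ,
        pow_card_orb_eq_one hf ho, one_mul, hαβ, hinv, sq]
      simp only [mul_assoc]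
    · set ω := γ ^ (k + 1) * (c * h) with hω
      set G := Subgroup.closure ({α, β, ω} : Set (Perm Ω)) with hG
      have mα : α ∈ G := Subgroup.subset_closure (by simp)
      have mβ : β ∈ G := Subgroup.subset_closure (by simp)
      have mω : ω ∈ G := Subgroup.subset_closure (by simp)
      have mg : α * β ∈ G := G.mul_mem mα mβ
      have hhq : h q ∈ V := by
        rw [← hV]
        exact Finset.mem_image_of_mem _ hq
      have hωq : ω q = h q := by
        rw [hω, Perm.mul_apply, Perm.mul_apply, hc.fix _ (fun h' => dUV h' hhq)]
        exact Function.IsFixedPt.perm_pow (hf _ (fun h' => dSV h' hhq)) _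
      have hcov : ∀ x, x ∈ S ∨ x ∈ U ∨ x ∈ V := by
        have : S ∪ (U ∪ V) = Finset.univ := by
          apply Finset.eq_univ_of_card
          rw [Finset.card_union_of_disjoint, Finset.card_union_of_disjoint, hU, hVc, hN]
          · omega
          · exact Finset.disjoint_left.2 dUV
          · rw [Finset.disjoint_left]
            intro x hx hx'
            rcases Finset.mem_union.1 hx' with h | h
            · exact dSU hx h
            · exact dSV hx h
        intro x
        have := Finset.eq_univ_iff_forall.1 this x
        simpa using this
      have hall : ∀ x, ∃ g ∈ G, g p = x := by
        obtain ⟨g1, m1, e1⟩ := rel_of_orb mα hpq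
        intro x
        rcases hcov x with hx | hx | hx
        · exact rel_of_orb mg (by rwa [oS p hp])
        · obtain ⟨g2, m2, e2⟩ := rel_of_orb (x := q) (z := x) mg (by rwa [oU q hq])
          exact ⟨g2 * g1, G.mul_mem m2 m1, by rw [Perm.mul_apply, e1, e2]⟩
        · obtain ⟨g2, m2, e2⟩ := rel_of_orb (x := h q) (z := x) mg (by rwa [oV _ hhq])
          exact ⟨g2 * (ω * g1), G.mul_mem m2 (G.mul_mem mω m1), by
            rw [Perm.mul_apply, Perm.mul_apply, e1, hωq, e2]⟩
      intro x z
      obtain ⟨g1, m1, e1⟩ := hall x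
      obtain ⟨g2, m2, e2⟩ := hall z
      exact ⟨g2 * g1⁻¹, G.mul_mem m2 (G.inv_mem m1), by
        rw [Perm.mul_apply, ← e1, ← e2]
        simp⟩

theorem case1 {d n x y k : ℕ} {A B : Multiset ℕ} (hN : Fintype.card Ω = d) (hn : n + 2 * y = d)
    (hodd : Odd n) (hy : 1 ≤ y) (hPT : PT Ω n x k A B) :
    ∃ α β : Perm Ω, fullCycleType α = (x + y) ::ₘ y ::ₘ A ∧
      fullCycleType β = (k + 1) ::ₘ (B + Multiset.replicate (2 * y - 1) 1) ∧
      fullCycleType (α * β) = {n, y, y} ∧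
      ∃ ω : Perm Ω, ω ^ 2 = α * β ∧ SubgroupTransitive (Subgroup.closure {α, β, ω}) := by
  obtain ⟨α, β, S, p, hT, rfl, hp, hxp, hkp⟩ := hPT
  have hSc : Sᶜ.card = 2 * y := by
    rw [Finset.card_compl]
    omega
  obtain ⟨U, hUS, hU⟩ := Finset.exists_subset_card_eq (s := Sᶜ) (n := y) (by omega)
  set V := Sᶜ \ U with hV
  have hVc : V.card = y := by
    rw [hV, Finset.card_sdiff_of_subset hUS]
    omega
  have nUS : ∀ w ∈ U, w ∉ S := fun w hw => Finset.mem_compl.1 (hUS hw)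
  have nVS : ∀ w ∈ V, w ∉ S := fun w hw => Finset.mem_compl.1 (Finset.mem_sdiff.1 hw).1
  have nVU : ∀ w ∈ V, w ∉ U := fun w hw => (Finset.mem_sdiff.1 hw).2
  have dSU : _root_.Disjoint S U := Finset.disjoint_left.2 (fun w h h' => nUS w h' h)
  have dSV : _root_.Disjoint S V := Finset.disjoint_left.2 (fun w h h' => nVS w h' h)
  have dUV : _root_.Disjoint U V := Finset.disjoint_left.2 (fun w h h' => nVU w h' h)
  obtain ⟨q, hq⟩ : U.Nonempty := Finset.card_pos.1 (by omega)
  obtain ⟨c, hc⟩ := Fresh.exists ⟨q, hq⟩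
  obtain ⟨h, hh, hhf, hhV⟩ := exists_flip dUV (by omega)
  have hc2 := hc.conj h
  rw [hhV] at hc2
  have hrep : Fintype.card Ω - S.card = y + y := by omega
  have hca := hT.ca
  have hcb := hT.cb
  have hcg := hT.cg
  have aU : ∀ w ∈ U, α w = w := fun w hw => hT.fa w (nUS w hw)
  have aV : ∀ w ∈ V, (α * c) w = w := fun w hw => by
    rw [Perm.mul_apply, hc.fix w (nVU w hw), hT.fa w (nVS w hw)]
  have pU : p ∉ U := fun h' => nUS p h' hp
  have pV : p ∉ V := fun h' => nVS p h' hp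
  have qV : q ∉ V := fun h' => nVU q h' hq
  have op : orb (α * c * (h * c * h⁻¹)) p = orb α p := by
    rw [hc2.orb_out _ aV p pV, hc.orb_out _ aU p pU]
  have oq : orb (α * c * (h * c * h⁻¹)) q = U := by
    rw [hc2.orb_out _ aV q qV, hc.orb_in _ aU q hq]
  have npq : q ∉ orb (α * c * (h * c * h⁻¹)) p := by
    intro h'
    have e := orb_eq_iff.2 (mem_orb.1 h')
    rw [oq] at e
    exact pU (e ▸ self_mem_orb _ p)
  have bq : orb β q = {q} := orb_fixed (hT.fb q (nUS q hq))
  have npq2 : q ∉ orb β p := by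
    intro h'
    have e := orb_eq_iff.2 (mem_orb.1 h')
    rw [bq] at e
    have := self_mem_orb β p
    rw [e, Finset.mem_singleton] at this
    exact pU (this ▸ hq)
  have c1 : Commute β c := commute_of_fix U (fun w hw => hT.fb w (nUS w hw)) hc.fix
  have c2 : Commute β (h * c * h⁻¹) := commute_of_fix V (fun w hw => hT.fb w (nVS w hw)) hc2.fix
  have hprod : (α * c * (h * c * h⁻¹) * swap p q) * (swap p q * β) =
      α * β * c * (h * c * h⁻¹) := by
    have : (α * c * (h * c * h⁻¹) * swap p q) * (swap p q * β) = α * (c * (h * c * h⁻¹) * β) := by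
      rw [mul_assoc _ (swap p q), ← mul_assoc (swap p q), swap_mul_self, one_mul]
      simp only [mul_assoc]
    rw [this, ← (c1.mul_right c2).eq]
    simp only [mul_assoc]
  refine ⟨α * c * (h * c * h⁻¹) * swap p q, swap p q * β, ?_, ?_, ?_⟩
  · have e1 := hc.ct α aU (Multiset.replicate y 1 + (x ::ₘ A)) (by
      rw [hca, hrep, hU, Multiset.replicate_add]
      simp only [← Multiset.singleton_add]
      abel)
    have e2 := hc2.ct _ aV (y ::ₘ x ::ₘ A) (by
      rw [e1, hU, hVc]
      simp only [← Multiset.singleton_add]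
      abel)
    apply merge_ct' npq (by rw [op, hxp]) (by rw [oq, hU])
    rw [e2, hVc]
    simp only [← Multiset.singleton_add]
    abel
  · apply lmerge_ct' npq2 hkp (by rw [bq]; rfl)
    rw [hcb, hrep, show y + y = 2 * y - 1 + 1 by omega, Multiset.replicate_succ]
    simp only [← Multiset.singleton_add]
    abel
  · apply finish (γ := α * β) (c := c) (h := h) (S := S) (U := U) (V := V) (p := p) (q := q)
    · intro w hw
      rw [Perm.mul_apply, hT.fb w hw, hT.fa w hw]
    · exact hT.og
    · exact hcg
    · exact hodd
    · exact hc
    · exact hU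
    · exact hh
    · exact hhf
    · exact hhV
    · exact dSU
    · exact dSV
    · exact dUV
    · omega
    · exact hp
    · exact hq
    · exact hprod
    · rw [merge_orb_in npq (Finset.mem_union_left _ (self_mem_orb _ _))]
      exact Finset.mem_union_right _ (self_mem_orb _ _)

theorem swap_identity {a b e f p : Ω} (h1 : a ≠ b) (h2 : a ≠ e) (h3 : a ≠ f) (h4 : a ≠ p)
    (h5 : b ≠ e) (h6 : b ≠ f) (h7 : b ≠ p) (h8 : e ≠ f) (h9 : e ≠ p) (h10 : f ≠ p) :
    swap a p * swap p e * swap b f * (swap a b * swap e f) =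
      swap a f * (swap b p * swap p e) := by
  ext w
  simp only [Perm.mul_apply]
  by_cases wa : w = a
  · subst wa
    simp [swap_apply_of_ne_of_ne, *, Ne.symm]
  by_cases wb : w = b
  · subst wb
    simp [swap_apply_of_ne_of_ne, *, Ne.symm]
  by_cases we : w = e
  · subst we
    simp [swap_apply_of_ne_of_ne, *, Ne.symm]
  by_cases wf : w = f
  · subst wf
    simp [swap_apply_of_ne_of_ne, *, Ne.symm]
  by_cases wp : w = p
  · subst wp
    simp [swap_apply_of_ne_of_ne, *, Ne.symm]
  simp [swap_apply_of_ne_of_ne, *]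

theorem notMem_orb_of_eq {σ : Perm Ω} {i j : Ω} {T : Finset Ω} (h : orb σ j = T) (hi : i ∉ T) :
    j ∉ orb σ i := by
  intro h'
  have e := orb_eq_iff.2 (mem_orb.1 h')
  rw [h] at e
  exact hi (e ▸ self_mem_orb _ i)

theorem case2 {d n y z b : ℕ} {A B : Multiset ℕ} (hN : Fintype.card Ω = d)
    (hn : n + 2 * (y + 1) + (z + 1) = d)
    (hodd : Odd (n + (z + 1))) (hy : 1 ≤ y) (hz : 1 ≤ z) (hPT : PT Ω n 1 b A B) :
    ∃ α β : Perm Ω, fullCycleType α = (y + 2) ::ₘ (y + 1) ::ₘ (z + 1) ::ₘ A ∧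
      fullCycleType β = 2 ::ₘ 2 ::ₘ ((b ::ₘ B) + Multiset.replicate (2 * y + z - 1) 1) ∧
      fullCycleType (α * β) = {n + (z + 1), y + 1, y + 1} ∧
      ∃ ω : Perm Ω, ω ^ 2 = α * β ∧ SubgroupTransitive (Subgroup.closure {α, β, ω}) := by
  obtain ⟨α, β, S, p, hT, rfl, hp, hxp, -⟩ := hPT
  have hSc : Sᶜ.card = 2 * (y + 1) + (z + 1) := by
    rw [Finset.card_compl]
    omega
  obtain ⟨U, hUS, hU⟩ := Finset.exists_subset_card_eq (s := Sᶜ) (n := y + 1) (by omega)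
  have h1 : (Sᶜ \ U).card = y + 1 + (z + 1) := by
    rw [Finset.card_sdiff_of_subset hUS]
    omega
  obtain ⟨W, hWS, hW⟩ := Finset.exists_subset_card_eq (s := Sᶜ \ U) (n := z + 1) (by omega)
  set V := (Sᶜ \ U) \ W with hV
  have hVc : V.card = y + 1 := by
    rw [hV, Finset.card_sdiff_of_subset hWS]
    omega
  have nUS : ∀ w ∈ U, w ∉ S := fun w hw => Finset.mem_compl.1 (hUS hw)
  have nWS : ∀ w ∈ W, w ∉ S := fun w hw => Finset.mem_compl.1 (Finset.mem_sdiff.1 (hWS hw)).1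
  have nWU : ∀ w ∈ W, w ∉ U := fun w hw => (Finset.mem_sdiff.1 (hWS hw)).2
  have nVW : ∀ w ∈ V, w ∉ W := fun w hw => (Finset.mem_sdiff.1 hw).2
  have nVS : ∀ w ∈ V, w ∉ S := fun w hw =>
    Finset.mem_compl.1 (Finset.mem_sdiff.1 (Finset.mem_sdiff.1 hw).1).1
  have nVU : ∀ w ∈ V, w ∉ U := fun w hw => (Finset.mem_sdiff.1 (Finset.mem_sdiff.1 hw).1).2
  have dUV : _root_.Disjoint U V := Finset.disjoint_left.2 (fun w h h' => nVU w h' h)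
  -- choice of the points
  obtain ⟨f, hf⟩ : U.Nonempty := Finset.card_pos.1 (by omega)
  obtain ⟨e, he⟩ : W.Nonempty := Finset.card_pos.1 (by omega)
  set U' := U.erase f with hU'
  set W' := W.erase e with hW'
  have hU'c : U'.card = y := by
    rw [hU', Finset.card_erase_of_mem hf]
    omega
  have hW'c : W'.card = z := by
    rw [hW', Finset.card_erase_of_mem he]
    omega
  have sU : ∀ w ∈ U', w ∈ U := fun w hw => Finset.mem_of_mem_erase hw
  have sW : ∀ w ∈ W', w ∈ W := fun w hw => Finset.mem_of_mem_erase hw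
  have fU' : f ∉ U' := Finset.notMem_erase _ _
  have eW' : e ∉ W' := Finset.notMem_erase _ _
  obtain ⟨a, ha'⟩ : U'.Nonempty := Finset.card_pos.1 (by omega)
  obtain ⟨b', hb'⟩ : W'.Nonempty := Finset.card_pos.1 (by omega)
  have ha := sU a ha'
  have hb := sW b' hb'
  obtain ⟨u, hu⟩ := Fresh.exists ⟨a, ha'⟩
  obtain ⟨v, hv⟩ := Fresh.exists ⟨b', hb'⟩
  have hc : Fresh U (u * swap a f) := by
    have := hu.cons ha' fU'
    rwa [hU', Finset.insert_erase hf] at this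
  obtain ⟨h, hh, hhf, hhV⟩ := exists_flip dUV (by omega)
  have hc2 := hc.conj h
  rw [hhV] at hc2
  set c2 := h * (u * swap a f) * h⁻¹ with hc2def
  -- distinctness
  have nUW : ∀ w ∈ U, w ∉ W := fun w h h' => nWU w h' h
  have nSU : ∀ w ∈ S, w ∉ U := fun w h h' => nUS w h' h
  have nSW : ∀ w ∈ S, w ∉ W := fun w h h' => nWS w h' h
  have nSV : ∀ w ∈ S, w ∉ V := fun w h h' => nVS w h' h
  have nUV : ∀ w ∈ U, w ∉ V := fun w h h' => nVU w h' h
  have nWV : ∀ w ∈ W, w ∉ V := fun w h h' => nVW w h' h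
  have ab : a ≠ b' := fun h => nUW a ha (h ▸ hb)
  have ae : a ≠ e := fun h => nUW a ha (h ▸ he)
  have af : a ≠ f := fun h => fU' (h ▸ ha')
  have ap : a ≠ p := fun h => nUS a ha (h ▸ hp)
  have be : b' ≠ e := fun h => eW' (h ▸ hb')
  have bf : b' ≠ f := fun h => nWU b' hb (h ▸ hf)
  have bp : b' ≠ p := fun h => nWS b' hb (h ▸ hp)
  have ef : e ≠ f := fun h => nWU e he (h ▸ hf)
  have ep : e ≠ p := fun h => nWS e he (h ▸ hp)
  have fp : f ≠ p := fun h => nUS f hf (h ▸ hp)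
  have αp : α p = p := by
    have : orb α p = {p} := by
      obtain ⟨w, hw⟩ := Finset.card_eq_one.1 hxp
      have := self_mem_orb α p
      rw [hw, Finset.mem_singleton] at this
      rw [hw, this]
    have h2 : α p ∈ orb α p := mem_orb.2 (sameCycle_apply_right.2 (SameCycle.refl _ _))
    rwa [this, Finset.mem_singleton] at h2
  have αU : ∀ w ∈ U, α w = w := fun w hw => hT.fa w (nUS w hw)
  have αW : ∀ w ∈ W, α w = w := fun w hw => hT.fa w (nWS w hw)
  have αV : ∀ w ∈ V, α w = w := fun w hw => hT.fa w (nVS w hw)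
  have βU : ∀ w ∈ U, β w = w := fun w hw => hT.fb w (nUS w hw)
  have βW : ∀ w ∈ W, β w = w := fun w hw => hT.fb w (nWS w hw)
  have βV : ∀ w ∈ V, β w = w := fun w hw => hT.fb w (nVS w hw)
  -- swaps fix things
  have sfix : ∀ (i j : Ω) (T : Finset Ω), i ∈ T → j ∈ T → ∀ w ∉ T, swap i j w = w := by
    intro i j T hi hj w hw
    exact swap_apply_of_ne_of_ne (fun h => hw (h ▸ hi)) (fun h => hw (h ▸ hj))
  have uU : ∀ w ∉ U, u w = w := fun w hw => hu.fix w (fun h => hw (sU w h))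
  have vW : ∀ w ∉ W, v w = w := fun w hw => hv.fix w (fun h => hw (sW w h))
  have bvW : v b' ∈ W' := by
    have h2 : v b' ∈ orb (1 * v) b' := mem_orb.2 (by
      rw [one_mul]
      exact sameCycle_apply_right.2 (SameCycle.refl _ _))
    rwa [hv.orb_in 1 (fun _ _ => rfl) b' hb'] at h2
  set b'' := v b' with hb''
  set γ := α * β with hγ
  have γW : ∀ w ∈ W, γ w = w := fun w hw => by
    rw [hγ, Perm.mul_apply, βW w hw, αW w hw]
  set γ0 := swap b'' p * (swap p e * (γ * v)) with hγ0
  have hrep : Fintype.card Ω - S.card = y + z + (y + 1) + 1 + 1 := by omega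
  have hca := hT.ca
  have hcb := hT.cb
  have hcg := hT.cg
  rw [← hγ] at hcg
  -- γ0
  have gv1 : ∀ w ∈ S, orb (γ * v) w = S := by
    intro w hw
    rw [hv.orb_out γ (fun w hw => γW w (sW w hw)) w (fun h => nSW w hw (sW w h)), hT.og w hw]
  have gv2 : ∀ w ∈ W', orb (γ * v) w = W' := by
    intro w hw
    rw [hv.orb_in γ (fun w hw => γW w (sW w hw)) w hw]
  have gv3 : orb (γ * v) e = {e} := by
    rw [hv.orb_out γ (fun w hw => γW w (sW w hw)) e eW', orb_fixed (γW e he)]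
  have gvct : fullCycleType (γ * v) = z ::ₘ S.card ::ₘ Multiset.replicate (2 * (y + 1) + 1) 1 := by
    have := hv.ct γ (fun w hw => γW w (sW w hw))
      (S.card ::ₘ Multiset.replicate (2 * (y + 1) + 1) 1) (by
        rw [hcg, hrep, hW'c,
          show y + z + (y + 1) + 1 + 1 = z + (2 * (y + 1) + 1) by omega, Multiset.replicate_add]
        simp only [← Multiset.singleton_add]
        abel)
    rw [this, hW'c]
  have n1 : e ∉ orb (γ * v) p := by
    rw [gv1 p hp]
    exact nWS e he
  have g21 : ∀ w, w ∈ S ∨ w = e → orb (swap p e * (γ * v)) w = S ∪ {e} := by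
    intro w hw
    rw [lmerge_orb_in n1, gv1 p hp, gv3]
    rw [gv1 p hp, gv3]
    simpa [or_comm] using hw
  have g22 : ∀ w ∈ W', orb (swap p e * (γ * v)) w = W' := by
    intro w hw
    rw [lmerge_orb_out n1, gv2 w hw]
    rw [gv1 p hp, gv3]
    simp only [Finset.mem_union, Finset.mem_singleton, not_or]
    exact ⟨nWS w (sW w hw), fun h => eW' (h ▸ hw)⟩
  have hSe : (S ∪ {e}).card = S.card + 1 := by
    rw [Finset.card_union_of_disjoint]
    · rfl
    · simpa using nWS e he
  have g2ct : fullCycleType (swap p e * (γ * v)) =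
      (S.card + 1) ::ₘ z ::ₘ Multiset.replicate (2 * (y + 1)) 1 := by
    apply lmerge_ct' n1 (by rw [gv1 p hp]) (by rw [gv3]; rfl)
    rw [gvct, Multiset.replicate_succ]
    simp only [← Multiset.singleton_add]
    abel
  have n2 : p ∉ orb (swap p e * (γ * v)) b'' := by
    rw [g22 b'' bvW]
    exact fun h => nSW p hp (sW p h)
  have hWe : W' ∪ (S ∪ {e}) = S ∪ W := by
    ext w
    simp only [Finset.mem_union, Finset.mem_singleton, hW', Finset.mem_erase]
    by_cases hw : w = e
    · simp [hw, he]
    · simp [hw, or_comm]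
  have hSW : (S ∪ W).card = S.card + (z + 1) := by
    rw [Finset.card_union_of_disjoint, hW]
    exact Finset.disjoint_left.2 nSW
  have g3 : ∀ w ∈ S ∪ W, orb γ0 w = S ∪ W := by
    intro w hw
    rw [hγ0, lmerge_orb_in n2]
    · rw [g22 b'' bvW, g21 p (Or.inl hp), hWe]
    · rw [g22 b'' bvW, g21 p (Or.inl hp), hWe]
      exact hw
  have g3ct : fullCycleType γ0 = (S ∪ W).card ::ₘ
      Multiset.replicate (Fintype.card Ω - (S ∪ W).card) 1 := by
    rw [hSW, show Fintype.card Ω - (S.card + (z + 1)) = 2 * (y + 1) by omega,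
      show S.card + (z + 1) = z + (S.card + 1) by omega]
    apply lmerge_ct' n2 (by rw [g22 b'' bvW, hW'c]) (by rw [g21 p (Or.inl hp), hSe])
    rw [g2ct, Multiset.cons_swap]
  have g3fix : ∀ w ∉ S ∪ W, γ0 w = w := by
    intro w hw
    have hw' := hw
    simp only [Finset.mem_union, not_or] at hw'
    rw [hγ0, Perm.mul_apply, Perm.mul_apply, Perm.mul_apply, vW w hw'.2, hγ, Perm.mul_apply,
      hT.fb w hw'.1, hT.fa w hw'.1, sfix p e (S ∪ W) _ _ w hw, sfix b'' p (S ∪ W) _ _ w hw]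
    · exact Finset.mem_union_right _ (sW _ bvW)
    · exact Finset.mem_union_left _ hp
    · exact Finset.mem_union_left _ hp
    · exact Finset.mem_union_right _ he
  -- α
  have t1f : ∀ w ∈ U', α w = w := fun w hw => αU w (sU w hw)
  have t2f : ∀ w ∈ W', (α * u) w = w := fun w hw => by
    rw [Perm.mul_apply, uU w (nWU w (sW w hw)), αW w (sW w hw)]
  have t3f : ∀ w ∈ V, (α * u * v) w = w := fun w hw => by
    rw [Perm.mul_apply, vW w (nVW w hw), Perm.mul_apply, uU w (nVU w hw), αV w hw]
  set t0 := α * u * v * c2 with ht0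
  have t0out : ∀ w, w ∉ U' → w ∉ W' → w ∉ V → orb t0 w = orb α w := by
    intro w w1 w2 w3
    rw [ht0, hc2.orb_out _ t3f w w3, hv.orb_out _ t2f w w2, hu.orb_out _ t1f w w1]
  have t0p : orb t0 p = {p} := by
    rw [t0out p (fun h => nSU p hp (sU p h)) (fun h => nSW p hp (sW p h)) (nSV p hp), orb_fixed αp]
  have t0e : orb t0 e = {e} := by
    rw [t0out e (fun h => nWU e he (sU e h)) eW' (nWV e he), orb_fixed (αW e he)]
  have t0f : orb t0 f = {f} := by
    rw [t0out f fU' (fun h => nUW f hf (sW f h)) (nUV f hf), orb_fixed (αU f hf)]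
  have t0a : orb t0 a = U' := by
    rw [ht0, hc2.orb_out _ t3f a (nUV a ha), hv.orb_out _ t2f a (fun h => nUW a ha (sW a h)),
      hu.orb_in _ t1f a ha']
  have t0b : orb t0 b' = W' := by
    rw [ht0, hc2.orb_out _ t3f b' (nWV b' hb), hv.orb_in _ t2f b' hb']
  have t0ct : fullCycleType t0 = y ::ₘ 1 ::ₘ 1 ::ₘ 1 ::ₘ z ::ₘ (y + 1) ::ₘ A := by
    have e1 := hu.ct _ t1f (Multiset.replicate z 1 + (Multiset.replicate (y + 1) 1 +
        (1 ::ₘ 1 ::ₘ 1 ::ₘ A))) (by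
      rw [hca, hrep, hU'c]
      simp only [Multiset.replicate_add, Multiset.replicate_one, ← Multiset.singleton_add]
      abel)
    have e2 := hv.ct _ t2f (Multiset.replicate (y + 1) 1 + (y ::ₘ 1 ::ₘ 1 ::ₘ 1 ::ₘ A)) (by
      rw [e1, hU'c, hW'c]
      simp only [← Multiset.singleton_add]
      abel)
    have e3 := hc2.ct _ t3f (z ::ₘ y ::ₘ 1 ::ₘ 1 ::ₘ 1 ::ₘ A) (by
      rw [e2, hW'c, hVc]
      simp only [← Multiset.singleton_add]
      abel)
    rw [ht0, e3, hVc]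
    simp only [← Multiset.singleton_add]
    abel
  have m1 : p ∉ orb t0 a := by
    rw [t0a]
    exact fun h => nSU p hp (sU p h)
  set t1 := t0 * swap a p with ht1
  have t1p : orb t1 p = U' ∪ {p} := by
    rw [ht1, merge_orb_in m1 (Finset.mem_union_right _ (self_mem_orb _ _)), t0a, t0p]
  have t1out : ∀ w, w ∉ U' → w ≠ p → orb t1 w = orb t0 w := by
    intro w w1 w2
    rw [ht1, merge_orb_out m1]
    rw [t0a, t0p]
    simp [w1, w2]
  have t1e : orb t1 e = {e} := by rw [t1out e (fun h => nWU e he (sU e h)) ep, t0e]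
  have t1f' : orb t1 f = {f} := by rw [t1out f fU' fp, t0f]
  have t1b : orb t1 b' = W' := by rw [t1out b' (fun h => nWU b' hb (sU b' h)) bp, t0b]
  have hUp : (U' ∪ {p}).card = y + 1 := by
    rw [Finset.card_union_of_disjoint, hU'c]
    · rfl
    · simpa using fun h => nSU p hp (sU p h)
  have t1ct : fullCycleType t1 = (y + 1) ::ₘ 1 ::ₘ 1 ::ₘ z ::ₘ (y + 1) ::ₘ A :=
    merge_ct' m1 (by rw [t0a, hU'c]) (by rw [t0p]; rfl) t0ct
  have m2 : e ∉ orb t1 p := by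
    rw [t1p]
    simp only [Finset.mem_union, Finset.mem_singleton, not_or]
    exact ⟨fun h => nWU e he (sU e h), ep⟩
  set t2 := t1 * swap p e with ht2
  have t2p : orb t2 p = U' ∪ {p} ∪ {e} := by
    rw [ht2, merge_orb_in m2 (Finset.mem_union_left _ (self_mem_orb _ _)), t1p, t1e]
  have t2out : ∀ w, w ∉ U' → w ≠ p → w ≠ e → orb t2 w = orb t1 w := by
    intro w w1 w2 w3
    rw [ht2, merge_orb_out m2]
    rw [t1p, t1e]
    simp [w1, w2, w3]
  have t2f' : orb t2 f = {f} := by rw [t2out f fU' fp ef.symm, t1f']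
  have t2b : orb t2 b' = W' := by rw [t2out b' (fun h => nWU b' hb (sU b' h)) bp be, t1b]
  have t2ct : fullCycleType t2 = (y + 2) ::ₘ 1 ::ₘ z ::ₘ (y + 1) ::ₘ A :=
    merge_ct' (a := y + 1) (b := 1) m2 (by rw [t1p, hUp]) (by rw [t1e]; rfl) t1ct
  have m3 : f ∉ orb t2 b' := by
    rw [t2b]
    exact fun h => nUW f hf (sW f h)
  set t3 := t2 * swap b' f with ht3
  have t3ct : fullCycleType t3 = (z + 1) ::ₘ (y + 2) ::ₘ (y + 1) ::ₘ A := by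
    apply merge_ct' m3 (by rw [t2b, hW'c]) (by rw [t2f']; rfl)
    rw [t2ct]
    simp only [← Multiset.singleton_add]
    abel
  have t3p : a ∈ orb t3 p := by
    rw [ht3, merge_orb_out m3, t2p]
    · simp [ha']
    · rw [t2b, t2f']
      simp only [Finset.mem_union, Finset.mem_singleton, not_or]
      exact ⟨fun h => nSW p hp (sW p h), fp.symm⟩
  -- β
  have be' : orb β e = {e} := orb_fixed (βW e he)
  have bf' : orb β f = {f} := orb_fixed (βU f hf)
  have r1 : f ∉ orb β e := by
    rw [be', Finset.mem_singleton]
    exact ef.symm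
  have ba' : orb (swap e f * β) a = {a} := by
    rw [lmerge_orb_out r1, orb_fixed (βU a ha)]
    rw [be', bf']
    simp [ae, af]
  have bb' : orb (swap e f * β) b' = {b'} := by
    rw [lmerge_orb_out r1, orb_fixed (βW b' hb)]
    rw [be', bf']
    simp [be, bf]
  have r2 : b' ∉ orb (swap e f * β) a := by
    rw [ba', Finset.mem_singleton]
    exact ab.symm
  have b1ct : fullCycleType (swap e f * β) =
      2 ::ₘ 1 ::ₘ 1 ::ₘ ((b ::ₘ B) + Multiset.replicate (2 * y + z - 1) 1) := by
    apply lmerge_ct' r1 (a := 1) (b := 1) (by rw [be']; rfl) (by rw [bf']; rfl)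
    rw [hcb, hrep, show y + z + (y + 1) + 1 + 1 = 2 * y + z - 1 + 1 + 1 + 1 + 1 by omega]
    simp only [Multiset.replicate_succ]
    simp only [← Multiset.singleton_add]
    abel
  have b2ct : fullCycleType (swap a b' * (swap e f * β)) =
      2 ::ₘ 2 ::ₘ ((b ::ₘ B) + Multiset.replicate (2 * y + z - 1) 1) := by
    apply lmerge_ct' r2 (a := 1) (b := 1) (by rw [ba']; rfl) (by rw [bb']; rfl)
    rw [b1ct]
    simp only [← Multiset.singleton_add]
    abel
  -- the product
  have hprod : t3 * (swap a b' * (swap e f * β)) = γ0 * (u * swap a f) * (h * (u * swap a f) * h⁻¹) := by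
    rw [← hc2def]
    set X := swap b' p * swap p e with hX
    have hid := swap_identity ab ae af ap be bf bp ef ep fp
    have s1 : t3 * (swap a b' * (swap e f * β)) = α * (u * v * c2 * (swap a f * X)) * β := by
      rw [hX, ← hid, ht3, ht2, ht1, ht0]
      simp only [mul_assoc]
    -- commutations
    have k1 : Commute α u := commute_of_fix U αU uU
    have k2 : Commute α v := commute_of_fix W αW vW
    have k3 : Commute α c2 := commute_of_fix V αV hc2.fix
    have k4 : Commute α (swap a f) := commute_of_fix U αU (sfix a f U ha hf)
    have αWp : ∀ w ∈ insert p W, α w = w := by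
      intro w hw
      rcases Finset.mem_insert.1 hw with rfl | hw
      · exact αp
      · exact αW w hw
    have k5 : Commute α X := by
      apply Commute.mul_right
      · exact commute_of_fix (insert p W) αWp
          (sfix _ _ _ (Finset.mem_insert_of_mem hb) (Finset.mem_insert_self _ _))
      · exact commute_of_fix (insert p W) αWp
          (sfix _ _ _ (Finset.mem_insert_self _ _) (Finset.mem_insert_of_mem he))
    have k6 : Commute α (u * v * c2 * (swap a f * X)) :=
      ((k1.mul_right k2).mul_right k3).mul_right (k4.mul_right k5)
    have s2 : α * (u * v * c2 * (swap a f * X)) * β = u * v * c2 * swap a f * X * γ := by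
      rw [k6.eq, hγ]
      simp only [mul_assoc]
    -- reorder
    have l1 : Commute v c2 := commute_of_fix V (fun w hw => vW w (nVW w hw)) hc2.fix
    have l2 : Commute v (swap a f) :=
      commute_of_fix U (fun w hw => vW w (nUW w hw)) (sfix a f U ha hf)
    have l3 : Commute c2 (swap a f) :=
      commute_of_fix U (fun w hw => hc2.fix w (nUV w hw)) (sfix a f U ha hf)
    have s3 : u * v * c2 * swap a f * X * γ = (u * swap a f) * c2 * (v * X * γ) := by
      have : v * c2 * swap a f = swap a f * c2 * v := by
        rw [l1.eq, mul_assoc, l2.eq, ← mul_assoc, l3.eq]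
      calc u * v * c2 * swap a f * X * γ = u * (v * c2 * swap a f) * X * γ := by
            simp only [mul_assoc]
        _ = _ := by
            rw [this]
            simp only [mul_assoc]
    have s4 : v * X * γ = γ0 := by
      have q1 : v * swap b' p = swap b'' p * v := by
        rw [mul_swap_eq_swap_mul, vW p (nSW p hp)]
      have q2 : Commute v (swap p e) := by
        apply Commute.symm
        apply commute_of_fix W' _ hv.fix
        intro w hw
        exact swap_apply_of_ne_of_ne (fun h => nSW p hp (h ▸ sW w hw)) (fun h => eW' (h ▸ hw))
      have q3 : Commute γ v := commute_of_fix W γW vW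
      calc v * X * γ = v * swap b' p * (swap p e * γ) := by
            rw [hX]
            simp only [mul_assoc]
        _ = swap b'' p * (v * swap p e) * γ := by
            rw [q1]
            simp only [mul_assoc]
        _ = swap b'' p * (swap p e * (v * γ)) := by
            rw [q2.eq]
            simp only [mul_assoc]
        _ = γ0 := by rw [hγ0, q3.eq]
    have j1 : Commute γ0 (u * swap a f) := by
      apply commute_of_fix U _ hc.fix
      intro w hw
      apply g3fix
      simp only [Finset.mem_union, not_or]
      exact ⟨nUS w hw, nUW w hw⟩
    have j2 : Commute γ0 c2 := by
      apply commute_of_fix V _ hc2.fix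
      intro w hw
      apply g3fix
      simp only [Finset.mem_union, not_or]
      exact ⟨nVS w hw, nVW w hw⟩
    rw [s1, s2, s3, s4, ← (j1.mul_right j2).eq]
    simp only [mul_assoc]
  refine ⟨t3, swap a b' * (swap e f * β), ?_, b2ct, ?_⟩
  · rw [t3ct]
    simp only [← Multiset.singleton_add]
    abel
  · rw [← hSW] at hodd ⊢
    apply finish (γ := γ0) (c := u * swap a f) (h := h) (S := S ∪ W) (U := U) (V := V) (p := p)
      (q := a)
    · exact g3fix
    · exact g3
    · exact g3ct
    · exact hodd
    · exact hc
    · exact hU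
    · exact hh
    · exact hhf
    · exact hhV
    · rw [Finset.disjoint_union_left]
      exact ⟨Finset.disjoint_left.2 nSU, Finset.disjoint_left.2 nWU⟩
    · rw [Finset.disjoint_union_left]
      exact ⟨Finset.disjoint_left.2 nSV, Finset.disjoint_left.2 nWV⟩
    · exact dUV
    · rw [hSW]
      omega
    · exact Finset.mem_union_left _ hp
    · exact ha
    · exact hprod
    · exact t3p

theorem nu_add_card {D : Multiset ℕ} (h : ∀ x ∈ D, 0 < x) : nu D + D.card = D.sum := by
  unfold nu
  induction D using Multiset.induction_on with
  | empty => simp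
  | cons a D ih =>
    have h1 := ih (fun x hx => h x (by simp [hx]))
    have h2 := h a (by simp)
    simp only [Multiset.map_cons, Multiset.sum_cons, Multiset.card_cons]
    omega

theorem split_ones {D : Multiset ℕ} (h : ∀ x ∈ D, 0 < x) :
    ∃ (C : Multiset ℕ) (m : ℕ), D = C + Multiset.replicate m 1 ∧ ∀ x ∈ C, 2 ≤ x := by
  induction D using Multiset.induction_on with
  | empty => exact ⟨0, 0, by simp, by simp⟩
  | cons a D ih =>
    obtain ⟨C, m, hC, h2⟩ := ih (fun x hx => h x (by simp [hx]))
    have ha := h a (by simp)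
    by_cases h1 : a = 1
    · refine ⟨C, m + 1, ?_, h2⟩
      rw [hC, h1, Multiset.replicate_succ, Multiset.add_cons]
    · refine ⟨a ::ₘ C, m, ?_, ?_⟩
      · rw [hC, Multiset.cons_add]
      · intro z hz
        rcases Multiset.mem_cons.1 hz with rfl | hz
        · omega
        · exact h2 z hz

theorem final_aux (d : ℕ) (hcard : Fintype.card Ω = d) (hd : Odd d)
    (D₁ D₂ : Multiset ℕ) (hP1 : IsPartitionOf d D₁) (hP2 : IsPartitionOf d D₂)
    (hsum : nu D₁ + nu D₂ = d - 1) (hdpos : 0 < d)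
    (hno1 : (1 : ℕ) ∉ D₁)
    (x y : ℕ) (hx : x ∈ D₁) (hy : y ∈ D₁) (hxy : y < x) :
    ∃ α β : Equiv.Perm Ω, fullCycleType α = D₁ ∧ fullCycleType β = D₂ ∧
      fullCycleType (α * β) = ({d - 2 * y, y, y} : Multiset ℕ) ∧
      ∃ ω : Equiv.Perm Ω, ω ^ 2 = α * β ∧
        SubgroupTransitive (Subgroup.closure {α, β, ω}) := by
  obtain ⟨hpos1, hs1⟩ := hP1
  obtain ⟨hpos2, hs2⟩ := hP2
  have hn1 := nu_add_card hpos1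
  have hn2 := nu_add_card hpos2
  have hge : ∀ z ∈ D₁, 2 ≤ z := fun z hz => by
    have := hpos1 z hz
    have : z ≠ 1 := fun h => hno1 (h ▸ hz)
    omega
  have hy2 := hge y hy
  obtain ⟨E, rfl⟩ := Multiset.exists_cons_of_mem hx
  have hyE : y ∈ E := by
    rcases Multiset.mem_cons.1 hy with h | h
    · omega
    · exact h
  obtain ⟨A, rfl⟩ := Multiset.exists_cons_of_mem hyE
  have hgeA : ∀ z ∈ A, 2 ≤ z := fun z hz => hge z (by simp [hz])
  have hA2 := two_card_le_sum hgeA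
  obtain ⟨C, m, rfl, hC⟩ := split_ones hpos2
  have hC2 := two_card_le_sum hC
  simp only [Multiset.sum_cons, Multiset.card_cons, Multiset.sum_add, Multiset.card_add,
    Multiset.sum_replicate, Multiset.card_replicate, smul_eq_mul, mul_one] at hs1 hs2 hn1 hn2
  have hc0 : 0 < C.card := by
    rcases Nat.eq_zero_or_pos C.card with h | h
    · rw [Multiset.card_eq_zero] at h
      subst h
      simp at *
      omega
    · exact h
  have hdA : d = x + y + A.sum := by omega
  have hm : 2 * y - 1 ≤ m := by omega
  have hodd : Odd (d - 2 * y) := by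
    rcases hd with ⟨r, hr⟩
    exact ⟨r - y, by omega⟩
  by_cases hcase : (∃ k ∈ C, 3 ≤ k) ∨ 2 ≤ x - y ∨ d - 2 * y = 1
  · obtain ⟨k, hkC, hk⟩ : ∃ k ∈ C, 3 ≤ k ∨ 2 ≤ x - y ∨ d - 2 * y = 1 := by
      rcases hcase with ⟨k, h1, h2⟩ | h
      · exact ⟨k, h1, Or.inl h2⟩
      · obtain ⟨k, hk⟩ := Multiset.card_pos_iff_exists_mem.1 hc0
        exact ⟨k, hk, Or.inr h⟩
    clear hcase
    have hk2 := hC k hkC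
    obtain ⟨C', rfl⟩ := Multiset.exists_cons_of_mem hkC
    simp only [Multiset.sum_cons, Multiset.card_cons] at hs2 hn2 hC2
    obtain ⟨n, hn⟩ : ∃ n, d - 2 * y = n + 1 := ⟨d - 2 * y - 1, by omega⟩
    obtain ⟨q, hq⟩ : ∃ q, m = q + (2 * y - 1) := ⟨m - (2 * y - 1), by omega⟩
    have hPT : PT Ω (n + 1) (x - y) (k - 1) A (C' + Multiset.replicate q 1) := by
      apply tree_exists_aux
      · omega
      · omega
      · omega
      · exact fun z hz => by have := hgeA z hz; omega
      · intro z hz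
        rcases Multiset.mem_add.1 hz with h | h
        · have := hC z (by simp [h]); omega
        · have := Multiset.eq_of_mem_replicate h; omega
      · omega
      · simp only [Multiset.sum_add, Multiset.sum_replicate, smul_eq_mul, mul_one]
        omega
      · simp only [Multiset.card_add, Multiset.card_replicate]
        omega
      · omega
    rw [← hn] at hPT
    obtain ⟨α, β, h1, h2, h3, h4⟩ := case1 (y := y) hcard (by omega) hodd (by omega) hPT
    refine ⟨α, β, ?_, ?_, h3, h4⟩
    · rw [h1, Nat.sub_add_cancel hxy.le]
    · rw [h2, Nat.sub_add_cancel (by omega), add_assoc, ← Multiset.replicate_add,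
        ← hq, Multiset.cons_add]
  · push Not at hcase
    obtain ⟨hc1, hc2, hc3⟩ := hcase
    have hCe : C = Multiset.replicate C.card 2 := by
      rw [Multiset.eq_replicate]
      exact ⟨rfl, fun z hz => by have := hC z hz; have := hc1 z hz; omega⟩
    obtain ⟨c, hc⟩ : ∃ c, C.card = c := ⟨_, rfl⟩
    rw [hc] at hCe
    subst hCe
    obtain ⟨z, hz⟩ : ∃ z, z ∈ A := by
      by_contra! H
      rw [Multiset.eq_zero_of_forall_notMem H] at hdA
      simp at hdA
      omega
    have hz2 := hgeA z hz
    obtain ⟨A', rfl⟩ := Multiset.exists_cons_of_mem hz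
    have hA'2 := two_card_le_sum (A := A') (fun w hw => hgeA w (by simp [hw]))
    simp only [Multiset.sum_cons, Multiset.card_cons, Multiset.sum_replicate,
      Multiset.card_replicate, smul_eq_mul] at hs1 hs2 hn1 hn2 hA2 hC2 hdA
    have hcA : c = A'.card + 2 := by omega
    have hPT : ∃ b B, PT Ω (A'.sum + 1) 1 b A' B ∧ b ::ₘ B = Multiset.replicate A'.card 2 +
        Multiset.replicate (A'.sum + 1 - 2 * A'.card) 1 := by
      rcases Nat.eq_zero_or_pos A'.card with h0 | h0
      · rw [Multiset.card_eq_zero] at h0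
        subst h0
        refine ⟨1, 0, ?_, by simp⟩
        apply tree_exists_aux <;> simp
        omega
      · obtain ⟨r, hr⟩ : ∃ r, A'.card = r + 1 := ⟨A'.card - 1, by omega⟩
        refine ⟨2, Multiset.replicate r 2 + Multiset.replicate (A'.sum + 1 - 2 * A'.card) 1,
          ?_, ?_⟩
        · apply tree_exists_aux
          · omega
          · omega
          · omega
          · exact fun w hw => by have := hgeA w (by simp [hw]); omega
          · intro w hw
            rcases Multiset.mem_add.1 hw with h | h
            · have := Multiset.eq_of_mem_replicate h; omega
            · have := Multiset.eq_of_mem_replicate h; omega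
          · omega
          · simp only [Multiset.sum_add, Multiset.sum_replicate, smul_eq_mul, mul_one]
            omega
          · simp only [Multiset.card_add, Multiset.card_replicate]
            omega
          · omega
        · rw [hr, Multiset.replicate_succ, Multiset.cons_add]
    obtain ⟨b, B, hPT, hB⟩ := hPT
    obtain ⟨y', rfl⟩ : ∃ y', y = y' + 1 := ⟨y - 1, by omega⟩
    obtain ⟨z', rfl⟩ : ∃ z', z = z' + 1 := ⟨z - 1, by omega⟩
    have hdy : d - 2 * (y' + 1) = A'.sum + 1 + (z' + 1) := by omega
    rw [hdy] at hodd ⊢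
    obtain ⟨α, β, h1, h2, h3, h4⟩ := case2 (y := y') hcard (by omega) hodd (by omega) (by omega) hPT
    refine ⟨α, β, ?_, ?_, h3, h4⟩
    · rw [h1]
      have : x = y' + 2 := by omega
      rw [this]
    · rw [h2, hB, add_assoc, ← Multiset.replicate_add, hcA, Multiset.replicate_succ,
        Multiset.replicate_succ, Multiset.cons_add, Multiset.cons_add]
      congr 5
      omega

end Helpers

/-- If `D₁` has no parts equal to 1 and contains parts `x > y`, then there are
`α ∈ D₁`, `β ∈ D₂` with `αβ` of cycle type `[d−2y, y, y]`, and an `ω` with `ω² = αβ` such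
that `⟨α, β, ω⟩` is transitive. -/
theorem statement_4 {Ω : Type*} [Fintype Ω] [DecidableEq Ω] (d : ℕ)
    (hcard : Fintype.card Ω = d) (hd : Odd d) (hdpos : 0 < d)
    (D₁ D₂ : Multiset ℕ) (hP1 : IsPartitionOf d D₁) (hP2 : IsPartitionOf d D₂)
    (hnt1 : D₁ ≠ {d} ∧ D₁ ≠ Multiset.replicate d 1)
    (hnt2 : D₂ ≠ {d} ∧ D₂ ≠ Multiset.replicate d 1)
    (hsum : nu D₁ + nu D₂ = d - 1) (hord : nu D₂ ≤ nu D₁)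
    (hne : D₁ ≠ twosAndOne d)
    (hno1 : (1 : ℕ) ∉ D₁)
    (x y : ℕ) (hx : x ∈ D₁) (hy : y ∈ D₁) (hxy : y < x) :
    ∃ α β : Equiv.Perm Ω, fullCycleType α = D₁ ∧ fullCycleType β = D₂ ∧
      fullCycleType (α * β) = ({d - 2 * y, y, y} : Multiset ℕ) ∧
      ∃ ω : Equiv.Perm Ω, ω ^ 2 = α * β ∧
        SubgroupTransitive (Subgroup.closure {α, β, ω}) := by
  exact final_aux d hcard hd D₁ D₂ hP1 hP2 hsum hdpos hno1 x y hx hy hxy
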